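/- Let 1 ≤ r ≤ 8 and let β ∈ ℤ^{1+r} satisfy β·β > 0. If l_1 ≠ l_2 are two distinct line classes with β·l_1 = β·l_2 = 0, then l_1·l_2 = 0 (the corresponding lines are disjoint). Moreover, the number of line classes l with β·l = 0 is at most r. -/

import Mathlib

/-!
The class `β` has positive square, so by the Hodge index theorem the pairing, which has signature
`(1, r)`, is negative definite on the orthogonal complement of `β` (`inter_self_neg`; here this is
just the Cauchy–Schwarz inequality). If `l₁ ≠ l₂` are line classes in that complement and
`m = l₁·l₂`, then `l₁ - l₂` and `l₁ + l₂` are nonzero (the latter has anticanonical degree `2`), so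
`(l₁ - l₂)² = -2 - 2m < 0` and `(l₁ + l₂)² = -2 + 2m < 0`, whence `m = 0`.

Consequently `β` together with the line classes orthogonal to it is a pairwise orthogonal family of
vectors of nonzero square. Such a family is linearly independent in `ℤ^{1+r}`, so it has at most
`r + 1` members, one of which is `β`.
-/

/-- Intersection pairing on the Picard lattice of `S_r`, with classes written in
`(d; a_1, …, a_r)` coordinates (the class `d·h − ∑ a_i·e_i`):
`(d; a)·(d'; a') = d·d' − ∑ a_i·a_i'`. -/
def inter {r : ℕ} (x y : ℤ × (Fin r → ℤ)) : ℤ :=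
  x.1 * y.1 - ∑ i, x.2 i * y.2 i

/-- The canonical class `K = (−3; −1, …, −1)` of `S_r`. -/
def Kcl (r : ℕ) : ℤ × (Fin r → ℤ) := (-3, fun _ => -1)

/-- A line class: `l·l = −1` and `(−K)·l = 1`. -/
def IsLine {r : ℕ} (l : ℤ × (Fin r → ℤ)) : Prop :=
  inter l l = -1 ∧ inter (-(Kcl r)) l = 1

/-- A conic class: `C·C = 0` and `(−K)·C = 2`. -/
def IsConic {r : ℕ} (C : ℤ × (Fin r → ℤ)) : Prop :=
  inter C C = 0 ∧ inter (-(Kcl r)) C = 2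

/-- Arithmetic genus `p_a(β) = β·(β+K)/2 + 1`. -/
def pa {r : ℕ} (β : ℤ × (Fin r → ℤ)) : ℤ :=
  inter β (β + Kcl r) / 2 + 1

/-- The intersection pairing as a `ℤ`-bilinear form. -/
def interForm (r : ℕ) : (ℤ × (Fin r → ℤ)) →ₗ[ℤ] (ℤ × (Fin r → ℤ)) →ₗ[ℤ] ℤ :=
  LinearMap.mk₂ ℤ inter
    (by intro x y z; simp [inter, add_mul, Finset.sum_add_distrib]; ring)
    (by intro c x y; simp [inter, mul_sub, Finset.mul_sum, mul_assoc])
    (by intro x y z; simp [inter, mul_add, Finset.sum_add_distrib]; ring)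
    (by intro c x y; simp [inter, mul_sub, Finset.mul_sum, mul_left_comm])

lemma interForm_apply {r : ℕ} (x y : ℤ × (Fin r → ℤ)) : interForm r x y = inter x y := rfl

lemma inter_comm {r : ℕ} (x y : ℤ × (Fin r → ℤ)) : inter x y = inter y x := by
  simp [inter, mul_comm]

/-- Hodge index theorem: the pairing is negative definite on the orthogonal complement of a class
of positive square. -/
lemma inter_self_neg {r : ℕ} {β x : ℤ × (Fin r → ℤ)} (hβ : 0 < inter β β)
    (hx : inter β x = 0) (hx0 : x ≠ 0) : inter x x < 0 := by
  by_contra! h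
  have cs := Finset.sum_mul_sq_le_sq_mul_sq Finset.univ β.2 x.2
  simp only [inter, ← pow_two] at hβ hx h
  have hA : 0 ≤ ∑ i, x.2 i ^ 2 := Finset.sum_nonneg fun i _ => sq_nonneg _
  have hB : 0 ≤ ∑ i, β.2 i ^ 2 := Finset.sum_nonneg fun i _ => sq_nonneg _
  rw [← sub_eq_zero.mp hx] at cs
  -- `β₀² x₀² ≤ (∑ β_i²)(∑ x_i²) ≤ (∑ β_i²) x₀²` while `∑ β_i² < β₀²`, which forces `x₀ = 0`.
  have h1 : x.1 ^ 2 = 0 := by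
    have h2 : 0 ≤ x.1 ^ 2 := sq_nonneg _
    nlinarith [mul_nonneg hB h]
  have h3 : ∑ i, x.2 i ^ 2 = 0 := by linarith
  rw [Finset.sum_eq_zero_iff_of_nonneg fun i _ => sq_nonneg _] at h3
  exact hx0 (Prod.ext (by simpa using h1) (funext fun i => by simpa using h3 i (Finset.mem_univ i)))

lemma inter_lines_eq_zero {r : ℕ} {β l₁ l₂ : ℤ × (Fin r → ℤ)} (hβ : 0 < inter β β)
    (h₁ : IsLine l₁) (h₂ : IsLine l₂) (hne : l₁ ≠ l₂)
    (ho₁ : inter β l₁ = 0) (ho₂ : inter β l₂ = 0) : inter l₁ l₂ = 0 := by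
  obtain ⟨s₁, k₁⟩ := h₁
  obtain ⟨s₂, k₂⟩ := h₂
  have hc := inter_comm l₁ l₂
  have hsub := inter_self_neg (x := l₁ - l₂) hβ
    (by simp only [← interForm_apply, map_sub] at *; lia) (sub_ne_zero.mpr hne)
  have hadd := inter_self_neg (x := l₁ + l₂) hβ
    (by simp only [← interForm_apply, map_add] at *; lia) (by
      intro h0
      have := congrArg (interForm r (-(Kcl r))) h0
      rw [map_add, map_zero, interForm_apply, interForm_apply] at this
      lia)
  simp only [← interForm_apply, map_add, map_sub, LinearMap.add_apply, LinearMap.sub_apply] at *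
  lia

/-- A class of positive square together with the line classes orthogonal to it is a linearly
independent family, being pairwise orthogonal with all squares nonzero. -/
lemma linearIndependent_big_lines {r : ℕ} {β : ℤ × (Fin r → ℤ)} (hβ : 0 < inter β β) :
    LinearIndependent ℤ (fun o : Option {l : ℤ × (Fin r → ℤ) | IsLine l ∧ inter β l = 0} =>
      o.elim β Subtype.val) := by
  set v := fun o : Option {l : ℤ × (Fin r → ℤ) | IsLine l ∧ inter β l = 0} =>
    o.elim β Subtype.val with hv
  have hortho : ∀ o o', o ≠ o' → inter (v o) (v o') = 0 := by
    rintro (_ | ⟨l, hl, ho⟩) (_ | ⟨l', hl', ho'⟩) hne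
    · exact absurd rfl hne
    · exact ho'
    · exact (inter_comm _ _).trans ho
    · exact inter_lines_eq_zero hβ hl hl' (by rintro rfl; exact hne rfl) ho ho'
  have hself : ∀ o, inter (v o) (v o) ≠ 0 := by
    rintro (_ | ⟨l, hl, ho⟩)
    · exact hβ.ne'
    · intro h
      have h' : inter l l = 0 := h
      have := hl.1
      lia
  rw [linearIndependent_iff']
  intro s c hsum o ho
  -- Pairing the relation with `v o` isolates the coefficient of `v o`.
  have h := congrArg (interForm r (v o)) hsum
  simp only [map_sum, map_smul, map_zero, interForm_apply, smul_eq_mul] at h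
  rw [Finset.sum_eq_single_of_mem o ho fun o' _ hne => by rw [hortho o o' hne.symm, mul_zero]] at h
  exact (mul_eq_zero.mp h).resolve_right (hself o)

/-- line classes orthogonal to a big class `β` are mutually orthogonal
(the corresponding lines are disjoint), and there are at most `r` of them. -/
theorem lines_orthogonal_to_big_class (r : ℕ) (hr1 : 1 ≤ r) (hr : r ≤ 8)
    (β : ℤ × (Fin r → ℤ)) (hbig : 0 < inter β β) :
    (∀ l₁ l₂ : ℤ × (Fin r → ℤ), IsLine l₁ → IsLine l₂ → l₁ ≠ l₂ →
      inter β l₁ = 0 → inter β l₂ = 0 → inter l₁ l₂ = 0) ∧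
    {l : ℤ × (Fin r → ℤ) | IsLine l ∧ inter β l = 0}.Finite ∧
    {l : ℤ × (Fin r → ℤ) | IsLine l ∧ inter β l = 0}.ncard ≤ r := by
  refine ⟨fun l₁ l₂ h₁ h₂ hne ho₁ ho₂ => inter_lines_eq_zero hbig h₁ h₂ hne ho₁ ho₂, ?_⟩
  have hli := linearIndependent_big_lines hbig
  have hfinO := hli.finite
  have hfin : {l : ℤ × (Fin r → ℤ) | IsLine l ∧ inter β l = 0}.Finite :=
    Set.finite_coe_iff.mp (Finite.of_injective _ (Option.some_injective _))
  refine ⟨hfin, ?_⟩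
  have := hfin.fintype
  have hcard := hli.fintype_card_le_finrank
  rw [Fintype.card_option, Module.finrank_prod, Module.finrank_self, Module.finrank_fin_fun,
    ← Nat.card_eq_fintype_card, Nat.card_coe_set_eq] at hcard
  lia
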